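/- Assume (A1) and (A2). Let Y(t) be a solution of the gradient flow of the relative entropy with center of mass at the origin, i.e. Σ_{i=1}^n y_i(t) = 0 for all t, and set S(t) = Σ_{i=1}^n |y_i(t)|². Then there exist constants C > 0 and c > 0 (depending on n, s, Y(0), the p_{ij} and β, but not on t) such that for every t ≥ 0 with S(t) ≥ C one has |y_i(t) − y_j(t)|² ≥ c S(t) for all i ≠ j. -/

import Mathlib

open Filter Topology

/-- The normalizing constant `Z = Σ_{k ≠ ℓ} β(|y_k - y_ℓ|²)`. -/
noncomputable def pairZ {E : Type*} [NormedAddCommGroup E] (β : ℝ → ℝ) {n : ℕ}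
    (Y : Fin n → E) : ℝ :=
  ∑ k : Fin n, ∑ l : Fin n, if k ≠ l then β (‖Y k - Y l‖ ^ 2) else 0

/-- The low-dimensional similarity `q_{ij}(Y) = β(|y_i - y_j|²) / Z(Y)`. -/
noncomputable def qfun {E : Type*} [NormedAddCommGroup E] (β : ℝ → ℝ) {n : ℕ}
    (Y : Fin n → E) (i j : Fin n) : ℝ :=
  β (‖Y i - Y j‖ ^ 2) / pairZ β Y

/-- The derivative `(log β)'` on `[0, ∞)`. -/
noncomputable def lbd (β : ℝ → ℝ) : ℝ → ℝ :=
  fun x => derivWithin (fun y => Real.log (β y)) (Set.Ici 0) x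

/-- `Y : ℝ → Fin n → E` is a solution of the gradient flow of the relative entropy:
`dy_i/dt = 4 Σ_{j ≠ i} (p_{ij} - q_{ij}(Y)) (y_i - y_j) (log β)'(|y_i - y_j|²)` for `t ≥ 0`. -/
def IsGradFlow {E : Type*} [NormedAddCommGroup E] [NormedSpace ℝ E] (β : ℝ → ℝ) {n : ℕ}
    (p : Fin n → Fin n → ℝ) (Y : ℝ → Fin n → E) : Prop :=
  ∀ i : Fin n, ∀ t ∈ Set.Ici (0 : ℝ),
    HasDerivWithinAt (fun u => Y u i)
      (∑ j ∈ Finset.univ.filter (· ≠ i),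
        (4 * (p i j - qfun β (Y t) i j) * lbd β (‖Y t i - Y t j‖ ^ 2)) • (Y t i - Y t j))
      (Set.Ici 0) t

/-- The diameter of the configuration `Y`, i.e. `max_{i,j} |y_i - y_j|`. -/
noncomputable def diamY {E : Type*} [NormedAddCommGroup E] {n : ℕ} (Y : Fin n → E) : ℝ :=
  Metric.diam (Set.range Y)

/-!
The flow is `dY/dt = -∇H` for the cross entropy `H = -∑ p_{ij} log q_{ij}`, so `H` never exceeds
its initial value `h`. As every summand of `H` is nonnegative, `q_{ij} ≥ e^{-h/m}` with
`m = min p_{ij}`; hence no two of the numbers `γ(|y_i - y_j|²)` differ by more than a factor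
`L = e^{h/m}`. The flow also preserves `∑ y_i`, so if `S` is large some pair has
`D = |y_i - y_j|² ≥ S / n`. For any other pair, at squared distance `d < D`, convexity gives
`γ(D) / L ≤ γ(d) ≤ (d / D) γ(D) + γ(0)`, and `γ(D) ≥ 2 L γ(0)` forces `d ≥ D / (2 L)`.
-/

section PairSums

open Finset RealInnerProductSpace

variable {ι M E : Type*} [Fintype ι]

lemma sum_offDiag_univ_eq_sum_sum_ite [DecidableEq ι] [AddCommMonoid M] (f : ι → ι → M) :
    ∑ e ∈ univ.offDiag, f e.1 e.2 = ∑ i, ∑ j, if i ≠ j then f i j else 0 := by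
  rw [← Fintype.sum_prod_type', ← sum_filter]
  exact sum_congr (by ext; simp) fun _ _ => rfl

lemma sum_offDiag_univ_eq_sum_sum_of_diag_eq_zero [AddCommMonoid M] {f : ι → ι → M}
    (hf : ∀ i, f i i = 0) :
    ∑ e ∈ univ.offDiag, f e.1 e.2 = ∑ i, ∑ j, f i j := by
  classical
  rw [sum_offDiag_univ_eq_sum_sum_ite]
  refine sum_congr rfl fun i _ => sum_congr rfl fun j _ => ite_eq_left_iff.2 fun hij => ?_
  rw [← not_not.1 hij, hf]

lemma sum_sum_eq_zero_of_antisymm [AddCommGroup M] [IsAddTorsionFree M] {f : ι → ι → M}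
    (hf : ∀ i j, f i j = -f j i) : ∑ i, ∑ j, f i j = 0 := by
  refine self_eq_neg.1 ?_
  calc ∑ i, ∑ j, f i j = ∑ i, ∑ j, -f j i := by simp only [← hf]
    _ = -∑ i, ∑ j, f i j := by rw [sum_comm]; simp only [sum_neg_distrib]

variable [NormedAddCommGroup E] [InnerProductSpace ℝ E]

lemma sum_sum_mul_inner_sub_sub {w : ι → ι → ℝ} (hw : ∀ i j, w i j = w j i) (y v : ι → E) :
    ∑ i, ∑ j, w i j * ⟪y i - y j, v i - v j⟫
      = 2 * ∑ i, ⟪∑ j, w i j • (y i - y j), v i⟫ := by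
  have hzero : ∑ i, ∑ j, w i j * ⟪y i - y j, v i + v j⟫ = 0 :=
    sum_sum_eq_zero_of_antisymm fun i j => by
      rw [hw, ← neg_sub, inner_neg_left, add_comm (v i), mul_neg]
  rw [← add_zero (∑ i, _), ← hzero, ← sum_add_distrib, mul_sum]
  refine sum_congr rfl fun i _ => ?_
  rw [← sum_add_distrib, sum_inner, mul_sum]
  refine sum_congr rfl fun j _ => ?_
  rw [real_inner_smul_left, inner_sub_right, inner_add_right]
  ring

lemma sum_sum_norm_sub_sq (y : ι → E) :
    ∑ i, ∑ j, ‖y i - y j‖ ^ 2 = 2 * Fintype.card ι * ∑ i, ‖y i‖ ^ 2 - 2 * ‖∑ i, y i‖ ^ 2 := by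
  simp only [norm_sub_sq_real, sum_add_distrib, sum_sub_distrib, ← mul_sum, ← inner_sum,
    ← sum_inner, sum_const, card_univ, nsmul_eq_mul, real_inner_self_eq_norm_sq]
  ring

lemma exists_sum_norm_sq_div_card_le_norm_sub_sq [Nonempty ι] {y : ι → E}
    (hy : 2 * ‖∑ i, y i‖ ^ 2 ≤ Fintype.card ι * ∑ i, ‖y i‖ ^ 2) :
    ∃ i j, (∑ k, ‖y k‖ ^ 2) / Fintype.card ι ≤ ‖y i - y j‖ ^ 2 := by
  have hsum : ∑ _e : ι × ι, (∑ k, ‖y k‖ ^ 2) / Fintype.card ι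
      ≤ ∑ e : ι × ι, ‖y e.1 - y e.2‖ ^ 2 := by
    rw [Fintype.sum_prod_type' fun i j => ‖y i - y j‖ ^ 2, sum_sum_norm_sub_sq, sum_const,
      card_univ, Fintype.card_prod, nsmul_eq_mul, Nat.cast_mul, mul_assoc,
      mul_div_cancel₀ _ (Nat.cast_ne_zero.2 Fintype.card_ne_zero)]
    linarith
  obtain ⟨⟨i, j⟩, -, hij⟩ := exists_le_of_sum_le univ_nonempty hsum
  exact ⟨i, j, hij⟩

end PairSums

lemma exists_pos_forall_mem_le {α : Type*} {s : Finset α} {f : α → ℝ} (hf : ∀ a ∈ s, 0 < f a) :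
    ∃ m : ℝ, 0 < m ∧ ∀ a ∈ s, m ≤ f a := by
  rcases s.eq_empty_or_nonempty with rfl | hs
  · exact ⟨1, one_pos, by simp⟩
  · obtain ⟨a, ha, hmin⟩ := s.exists_min_image f hs
    exact ⟨f a, hf a ha, hmin⟩

lemma le_two_mul_mul_of_convexOn_of_le_mul {f : ℝ → ℝ} (hf : ConvexOn ℝ (Set.Ici 0) f)
    {L D d : ℝ} (hL : 1 ≤ L) (hd : 0 ≤ d) (hf0 : 0 ≤ f 0) (hfD : 0 < f D)
    (hgrowth : 2 * L * f 0 ≤ f D) (hcomp : f D ≤ L * f d) : D ≤ 2 * L * d := by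
  rcases le_or_gt D d with hDd | hdD
  · exact hDd.trans (le_mul_of_one_le_left hd (by linarith))
  have hD : 0 < D := hd.trans_lt hdD
  have hconv : f d ≤ d / D * f D + (1 - d / D) * f 0 := by
    have := hf.2 (Set.mem_Ici.2 hD.le) (Set.mem_Ici.2 le_rfl) (div_nonneg hd hD.le)
      (sub_nonneg.2 ((div_le_one hD).2 hdD.le)) (add_sub_cancel _ _)
    simpa only [smul_eq_mul, mul_zero, add_zero, div_mul_cancel₀ _ hD.ne'] using this
  have hchain : f D ≤ L * (d / D) * f D + f D / 2 :=
    calc f D ≤ L * (d / D * f D + (1 - d / D) * f 0) := hcomp.trans (by gcongr)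
      _ ≤ L * (d / D * f D + f 0) := by
        have : 0 ≤ d / D * f 0 := by positivity
        gcongr
        linarith
      _ ≤ L * (d / D) * f D + f D / 2 := by linarith
  have hhalf : 1 / 2 ≤ L * (d / D) := le_of_mul_le_mul_right (by linarith) hfD
  rw [← mul_div_assoc, le_div_iff₀ hD] at hhalf
  linarith

section Entropy

open Finset

variable {E : Type*} [NormedAddCommGroup E] {n : ℕ} {β : ℝ → ℝ} {p : Fin n → Fin n → ℝ}
  {i j k l : Fin n}

lemma pairZ_eq_sum_offDiag (β : ℝ → ℝ) (y : Fin n → E) :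
    pairZ β y = ∑ e ∈ univ.offDiag, β (‖y e.1 - y e.2‖ ^ 2) :=
  (sum_offDiag_univ_eq_sum_sum_ite fun i j => β (‖y i - y j‖ ^ 2)).symm

lemma qfun_comm (β : ℝ → ℝ) (y : Fin n → E) (i j : Fin n) : qfun β y i j = qfun β y j i := by
  rw [qfun, qfun, norm_sub_rev]

lemma le_pairZ (hβ : ∀ x, 0 ≤ x → 0 < β x) (y : Fin n → E) (hij : i ≠ j) :
    β (‖y i - y j‖ ^ 2) ≤ pairZ β y := by
  rw [pairZ_eq_sum_offDiag]
  exact single_le_sum (f := fun e : Fin n × Fin n => β (‖y e.1 - y e.2‖ ^ 2))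
    (fun _ _ => (hβ _ (sq_nonneg _)).le) (mem_offDiag.2 ⟨mem_univ i, mem_univ j, hij⟩ : (i, j) ∈ _)

lemma pairZ_pos (hβ : ∀ x, 0 ≤ x → 0 < β x) (y : Fin n → E) (hij : i ≠ j) : 0 < pairZ β y :=
  (hβ _ (sq_nonneg _)).trans_le (le_pairZ hβ y hij)

lemma qfun_pos (hβ : ∀ x, 0 ≤ x → 0 < β x) (y : Fin n → E) (hij : i ≠ j) : 0 < qfun β y i j :=
  div_pos (hβ _ (sq_nonneg _)) (pairZ_pos hβ y hij)

lemma qfun_le_one (hβ : ∀ x, 0 ≤ x → 0 < β x) (y : Fin n → E) (hij : i ≠ j) :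
    qfun β y i j ≤ 1 :=
  div_le_one_of_le₀ (le_pairZ hβ y hij) (pairZ_pos hβ y hij).le

/-- The cross entropy `H(Y) = -∑_{i ≠ j} p_{ij} log q_{ij}(Y)`: the relative entropy of `p` with
respect to `q(Y)` up to the entropy of `p`, a constant that does not affect the gradient flow. -/
noncomputable def crossEntropy (β : ℝ → ℝ) (p : Fin n → Fin n → ℝ) (y : Fin n → E) : ℝ :=
  ∑ e ∈ univ.offDiag, p e.1 e.2 * -Real.log (qfun β y e.1 e.2)

lemma crossEntropy_eq_log_pairZ_sub (hβ : ∀ x, 0 ≤ x → 0 < β x)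
    (hsum : ∑ e ∈ univ.offDiag, p e.1 e.2 = 1) (y : Fin n → E) :
    crossEntropy β p y = Real.log (pairZ β y)
      - ∑ e ∈ univ.offDiag, p e.1 e.2 * Real.log (β (‖y e.1 - y e.2‖ ^ 2)) := by
  rw [← one_mul (Real.log (pairZ β y)), ← hsum, sum_mul, ← sum_sub_distrib]
  refine sum_congr rfl fun e he => ?_
  rw [qfun, Real.log_div (hβ _ (sq_nonneg _)).ne' (pairZ_pos hβ y (mem_offDiag.1 he).2.2).ne']
  ring

lemma mul_neg_log_qfun_nonneg (hβ : ∀ x, 0 ≤ x → 0 < β x) (hp : ∀ i j, i ≠ j → 0 ≤ p i j)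
    (y : Fin n → E) {e : Fin n × Fin n} (he : e ∈ univ.offDiag) :
    0 ≤ p e.1 e.2 * -Real.log (qfun β y e.1 e.2) :=
  have hne : e.1 ≠ e.2 := (mem_offDiag.1 he).2.2
  mul_nonneg (hp _ _ hne)
    (neg_nonneg.2 (Real.log_nonpos (qfun_pos hβ y hne).le (qfun_le_one hβ y hne)))

lemma crossEntropy_nonneg (hβ : ∀ x, 0 ≤ x → 0 < β x) (hp : ∀ i j, i ≠ j → 0 ≤ p i j)
    (y : Fin n → E) : 0 ≤ crossEntropy β p y :=
  sum_nonneg fun _ he => mul_neg_log_qfun_nonneg hβ hp y he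

lemma exp_neg_crossEntropy_div_le_qfun (hβ : ∀ x, 0 ≤ x → 0 < β x) {m : ℝ} (hm : 0 < m)
    (hp : ∀ i j, i ≠ j → m ≤ p i j) (y : Fin n → E) (hij : i ≠ j) :
    Real.exp (-(crossEntropy β p y / m)) ≤ qfun β y i j := by
  rw [← Real.le_log_iff_exp_le (qfun_pos hβ y hij), neg_le, le_div_iff₀' hm]
  calc m * -Real.log (qfun β y i j) ≤ p i j * -Real.log (qfun β y i j) := by
        gcongr
        · exact neg_nonneg.2 (Real.log_nonpos (qfun_pos hβ y hij).le (qfun_le_one hβ y hij))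
        · exact hp i j hij
    _ ≤ crossEntropy β p y :=
        single_le_sum (f := fun e : Fin n × Fin n => p e.1 e.2 * -Real.log (qfun β y e.1 e.2))
          (fun _ he => mul_neg_log_qfun_nonneg hβ (fun i j h => hm.le.trans (hp i j h)) y he)
          (mem_offDiag.2 ⟨mem_univ i, mem_univ j, hij⟩ : (i, j) ∈ _)

lemma inv_le_exp_crossEntropy_div_mul_inv (hβ : ∀ x, 0 ≤ x → 0 < β x) {m : ℝ} (hm : 0 < m)
    (hp : ∀ i j, i ≠ j → m ≤ p i j) (y : Fin n → E) (hij : i ≠ j) (hkl : k ≠ l) :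
    (β (‖y i - y j‖ ^ 2))⁻¹
      ≤ Real.exp (crossEntropy β p y / m) * (β (‖y k - y l‖ ^ 2))⁻¹ := by
  have hβkl : 0 < β (‖y k - y l‖ ^ 2) := hβ _ (sq_nonneg _)
  have hlower : Real.exp (-(crossEntropy β p y / m)) * β (‖y k - y l‖ ^ 2)
      ≤ β (‖y i - y j‖ ^ 2) :=
    calc _ ≤ Real.exp (-(crossEntropy β p y / m)) * pairZ β y := by
          gcongr
          exact le_pairZ hβ y hkl
      _ ≤ β (‖y i - y j‖ ^ 2) := (le_div_iff₀ (pairZ_pos hβ y hij)).1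
          (exp_neg_crossEntropy_div_le_qfun hβ hm hp y hij)
  calc (β (‖y i - y j‖ ^ 2))⁻¹
      ≤ (Real.exp (-(crossEntropy β p y / m)) * β (‖y k - y l‖ ^ 2))⁻¹ := by gcongr
    _ = _ := by rw [mul_inv, Real.exp_neg, inv_inv]

lemma norm_sub_sq_le_of_crossEntropy_le (hβ : ∀ x, 0 ≤ x → 0 < β x)
    (hconv : ConvexOn ℝ (Set.Ici 0) fun x => (β x)⁻¹) {m : ℝ} (hm : 0 < m)
    (hp : ∀ i j, i ≠ j → m ≤ p i j) {y : Fin n → E} {h : ℝ} (hy : crossEntropy β p y ≤ h)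
    (hij : i ≠ j) (hkl : k ≠ l)
    (hgrowth : 2 * Real.exp (h / m) * (β 0)⁻¹ ≤ (β (‖y i - y j‖ ^ 2))⁻¹) :
    ‖y i - y j‖ ^ 2 ≤ 2 * Real.exp (h / m) * ‖y k - y l‖ ^ 2 := by
  have hinv_pos (x : ℝ) (hx : 0 ≤ x) : 0 < (β x)⁻¹ := inv_pos.2 (hβ x hx)
  have hh : 0 ≤ h := (crossEntropy_nonneg hβ (fun i j hne => hm.le.trans (hp i j hne)) y).trans hy
  have hcomp : (β (‖y i - y j‖ ^ 2))⁻¹ ≤ Real.exp (h / m) * (β (‖y k - y l‖ ^ 2))⁻¹ :=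
    calc _ ≤ Real.exp (crossEntropy β p y / m) * (β (‖y k - y l‖ ^ 2))⁻¹ :=
          inv_le_exp_crossEntropy_div_mul_inv hβ hm hp y hij hkl
      _ ≤ _ := mul_le_mul_of_nonneg_right (Real.exp_le_exp.2 (div_le_div_of_nonneg_right hy hm.le))
          (hinv_pos _ (sq_nonneg _)).le
  exact le_two_mul_mul_of_convexOn_of_le_mul hconv (Real.one_le_exp (by positivity))
    (sq_nonneg _) (hinv_pos 0 le_rfl).le (hinv_pos _ (sq_nonneg _)) hgrowth hcomp

end Entropy

section Separation

open Finset

variable {E : Type*} [NormedAddCommGroup E] [InnerProductSpace ℝ E] {n : ℕ} {β : ℝ → ℝ}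
  {p : Fin n → Fin n → ℝ}

theorem exists_separation_of_crossEntropy_le [NeZero n] (hβ : ∀ x, 0 ≤ x → 0 < β x)
    (hconv : ConvexOn ℝ (Set.Ici 0) fun x => (β x)⁻¹)
    (htop : Tendsto (fun x => (β x)⁻¹) atTop atTop) {m : ℝ} (hm : 0 < m)
    (hp : ∀ i j, i ≠ j → m ≤ p i j) (h a : ℝ) :
    ∃ C c : ℝ, 0 < C ∧ 0 < c ∧ ∀ y : Fin n → E, crossEntropy β p y ≤ h → ‖∑ i, y i‖ ≤ a →
      C ≤ ∑ i, ‖y i‖ ^ 2 → ∀ i j, i ≠ j → c * ∑ k, ‖y k‖ ^ 2 ≤ ‖y i - y j‖ ^ 2 := by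
  have hn : (1 : ℝ) ≤ n := Nat.one_le_cast.2 (Nat.pos_of_neZero n)
  set L := Real.exp (h / m)
  obtain ⟨X, hX⟩ := eventually_atTop.1 (htop.eventually_ge_atTop (2 * L * (β 0)⁻¹))
  refine ⟨n * |X| + 2 * a ^ 2 + 1, (2 * L * n)⁻¹, by positivity, by positivity,
    fun y hy ha hS k l hkl => ?_⟩
  set S := ∑ i, ‖y i‖ ^ 2
  have hXpos : 0 ≤ n * |X| := by positivity
  have hSpos : 0 < S := by nlinarith
  have hcm : 2 * ‖∑ i, y i‖ ^ 2 ≤ Fintype.card (Fin n) * S := by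
    rw [Fintype.card_fin]
    nlinarith [pow_le_pow_left₀ (norm_nonneg _) ha 2]
  obtain ⟨i, j, hfar⟩ := exists_sum_norm_sq_div_card_le_norm_sub_sq hcm
  rw [Fintype.card_fin] at hfar
  have hij : i ≠ j := by
    rintro rfl
    rw [sub_self, norm_zero, zero_pow two_ne_zero] at hfar
    exact hfar.not_gt (by positivity)
  have hXS : X ≤ S / n := by
    rw [le_div_iff₀' (by positivity)]
    nlinarith [le_abs_self X]
  have hsep : S / n ≤ 2 * L * ‖y k - y l‖ ^ 2 := hfar.trans <|
    norm_sub_sq_le_of_crossEntropy_le hβ hconv hm hp hy hij hkl (hX _ (hXS.trans hfar))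
  rw [inv_mul_le_iff₀ (by positivity), mul_right_comm]
  exact (div_le_iff₀ (by positivity)).1 hsep

end Separation

section Flow

open Finset

variable {E : Type*} [NormedAddCommGroup E] {n : ℕ} {β : ℝ → ℝ} {p : Fin n → Fin n → ℝ}
  {Y : ℝ → Fin n → E}

/-- The coefficient of `y_i - y_j` in the velocity of `y_i` under the gradient flow. -/
noncomputable def flowWeight (β : ℝ → ℝ) (p : Fin n → Fin n → ℝ) (y : Fin n → E)
    (i j : Fin n) : ℝ :=
  4 * (p i j - qfun β y i j) * lbd β (‖y i - y j‖ ^ 2)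

lemma flowWeight_comm (hsymm : ∀ i j, p i j = p j i) (y : Fin n → E) (i j : Fin n) :
    flowWeight β p y i j = flowWeight β p y j i := by
  rw [flowWeight, flowWeight, hsymm, qfun_comm, norm_sub_rev]

variable [NormedSpace ℝ E]

/-- The vector field of the gradient flow. Its sum includes the vanishing term `j = i`, so that the
double sums over pairs are symmetric. -/
noncomputable def flowVelocity (β : ℝ → ℝ) (p : Fin n → Fin n → ℝ) (y : Fin n → E)
    (i : Fin n) : E :=
  ∑ j, flowWeight β p y i j • (y i - y j)

lemma sum_flowVelocity (hsymm : ∀ i j, p i j = p j i) (y : Fin n → E) :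
    ∑ i, flowVelocity β p y i = 0 :=
  have : IsAddTorsionFree E := .of_isTorsionFree ℝ E
  sum_sum_eq_zero_of_antisymm fun i j => by
    rw [flowWeight_comm hsymm, ← neg_sub, smul_neg]

lemma IsGradFlow.hasDerivWithinAt (hflow : IsGradFlow β p Y) {t : ℝ} (ht : 0 ≤ t) (i : Fin n) :
    HasDerivWithinAt (fun u => Y u i) (flowVelocity β p (Y t) i) (Set.Ici 0) t := by
  refine (hflow i t ht).congr_deriv (sum_subset (filter_subset _ _) fun j _ hj => ?_)
  obtain rfl : j = i := by simpa using hj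
  rw [sub_self, smul_zero]

lemma IsGradFlow.sum_eq (hflow : IsGradFlow β p Y) (hsymm : ∀ i j, p i j = p j i) {t : ℝ}
    (ht : 0 ≤ t) : ∑ i, Y t i = ∑ i, Y 0 i := by
  have hderiv : ∀ u, 0 ≤ u → HasDerivWithinAt (fun u => ∑ i, Y u i) 0 (Set.Ici 0) u :=
    fun u hu => (HasDerivWithinAt.fun_sum fun i _ => hflow.hasDerivWithinAt hu i).congr_deriv
      (sum_flowVelocity hsymm (Y u))
  exact constant_of_has_deriv_right_zero
    (fun u hu => (hderiv u hu.1).continuousWithinAt.mono Set.Icc_subset_Ici_self)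
    (fun u hu => (hderiv u hu.1).mono (Set.Ici_subset_Ici.2 hu.1)) t ⟨ht, le_rfl⟩

end Flow

section Dissipation

open Finset RealInnerProductSpace

lemma hasDerivWithinAt_mul_lbd {β : ℝ → ℝ} (hβ : ∀ x, 0 ≤ x → 0 < β x)
    (hdiff : DifferentiableOn ℝ β (Set.Ici 0)) {x : ℝ} (hx : 0 ≤ x) :
    HasDerivWithinAt β (β x * lbd β x) (Set.Ici 0) x := by
  have hβ' := (hdiff x hx).hasDerivWithinAt
  rwa [lbd, (hβ'.log (hβ x hx).ne').derivWithin (uniqueDiffOn_Ici 0 x hx),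
    mul_div_cancel₀ _ (hβ x hx).ne']

variable {E : Type*} [NormedAddCommGroup E] [InnerProductSpace ℝ E] {n : ℕ} {β : ℝ → ℝ}
  {p : Fin n → Fin n → ℝ} {Y : ℝ → Fin n → E}

lemma hasDerivWithinAt_comp_norm_sub_sq (hβ : ∀ x, 0 ≤ x → 0 < β x)
    (hdiff : DifferentiableOn ℝ β (Set.Ici 0)) {f g : ℝ → E} {f' g' : E} {s : Set ℝ} {t : ℝ}
    (hf : HasDerivWithinAt f f' s t) (hg : HasDerivWithinAt g g' s t) :
    HasDerivWithinAt (fun u => β (‖f u - g u‖ ^ 2))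
      (β (‖f t - g t‖ ^ 2) * (lbd β (‖f t - g t‖ ^ 2) * (2 * ⟪f t - g t, f' - g'⟫))) s t := by
  rw [← mul_assoc]
  exact HasDerivWithinAt.comp (h := fun u => ‖f u - g u‖ ^ 2) t
    (hasDerivWithinAt_mul_lbd hβ hdiff (sq_nonneg _)) (hf.sub hg).norm_sq
    fun u _ => sq_nonneg ‖f u - g u‖

lemma sum_inner_flowVelocity (hsymm : ∀ i j, p i j = p j i) (y v : Fin n → E) :
    ∑ i, ⟪flowVelocity β p y i, v i⟫ = 1 / 2 * ∑ e ∈ univ.offDiag,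
      flowWeight β p y e.1 e.2 * ⟪y e.1 - y e.2, v e.1 - v e.2⟫ := by
  rw [sum_offDiag_univ_eq_sum_sum_of_diag_eq_zero
    (f := fun i j => flowWeight β p y i j * ⟪y i - y j, v i - v j⟫) (by simp),
    sum_sum_mul_inner_sub_sub (flowWeight_comm hsymm y)]
  simp only [flowVelocity]
  ring

lemma hasDerivWithinAt_crossEntropy (hβ : ∀ x, 0 ≤ x → 0 < β x)
    (hdiff : DifferentiableOn ℝ β (Set.Ici 0)) (hsymm : ∀ i j, p i j = p j i)
    (hsum : ∑ e ∈ univ.offDiag, p e.1 e.2 = 1) {v : Fin n → E} {s : Set ℝ} {t : ℝ}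
    (hY : ∀ i, HasDerivWithinAt (fun u => Y u i) (v i) s t) :
    HasDerivWithinAt (fun u => crossEntropy β p (Y u))
      (-∑ i, ⟪flowVelocity β p (Y t) i, v i⟫) s t := by
  set r : Fin n × Fin n → ℝ := fun e =>
    lbd β (‖Y t e.1 - Y t e.2‖ ^ 2) * (2 * ⟪Y t e.1 - Y t e.2, v e.1 - v e.2⟫)
  have hβ' (e : Fin n × Fin n) := hasDerivWithinAt_comp_norm_sub_sq hβ hdiff (hY e.1) (hY e.2)
  have hlog (e : Fin n × Fin n) :
      HasDerivWithinAt (fun u => Real.log (β (‖Y u e.1 - Y u e.2‖ ^ 2))) (r e) s t :=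
    have hpos := (hβ (‖Y t e.1 - Y t e.2‖ ^ 2) (sq_nonneg _)).ne'
    ((hβ' e).log hpos).congr_deriv (mul_div_cancel_left₀ _ hpos)
  have hlogZ : HasDerivWithinAt (fun u => Real.log (pairZ β (Y u)))
      (∑ e ∈ univ.offDiag, qfun β (Y t) e.1 e.2 * r e) s t := by
    obtain ⟨e, he⟩ := nonempty_of_sum_ne_zero (hsum.trans_ne one_ne_zero)
    have hZ := (pairZ_pos hβ (Y t) (mem_offDiag.1 he).2.2).ne'
    simp only [pairZ_eq_sum_offDiag] at hZ ⊢
    refine ((HasDerivWithinAt.fun_sum fun e _ => hβ' e).log hZ).congr_deriv ?_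
    simp only [sum_div, qfun, pairZ_eq_sum_offDiag, r, mul_div_right_comm]
  simp only [crossEntropy_eq_log_pairZ_sub hβ hsum]
  refine (hlogZ.sub <| HasDerivWithinAt.fun_sum fun e _ =>
    (hlog e).const_mul (p e.1 e.2)).congr_deriv ?_
  rw [sum_inner_flowVelocity hsymm, mul_sum, ← sum_neg_distrib, ← sum_sub_distrib]
  refine sum_congr rfl fun e _ => ?_
  simp only [flowWeight, r]
  ring

lemma IsGradFlow.antitoneOn_crossEntropy (hflow : IsGradFlow β p Y) (hβ : ∀ x, 0 ≤ x → 0 < β x)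
    (hdiff : DifferentiableOn ℝ β (Set.Ici 0)) (hsymm : ∀ i j, p i j = p j i)
    (hsum : ∑ e ∈ univ.offDiag, p e.1 e.2 = 1) :
    AntitoneOn (fun t => crossEntropy β p (Y t)) (Set.Ici 0) := by
  have hderiv (t : ℝ) (ht : 0 ≤ t) :=
    hasDerivWithinAt_crossEntropy hβ hdiff hsymm hsum (hflow.hasDerivWithinAt ht)
  refine antitoneOn_of_hasDerivWithinAt_nonpos (convex_Ici 0)
    (fun t ht => (hderiv t ht).continuousWithinAt)
    (fun t ht => (hderiv t (interior_subset ht)).mono interior_subset)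
    fun t _ => neg_nonpos.2 (sum_nonneg fun i _ => real_inner_self_nonneg)

end Dissipation

theorem separation_proposition_general {E : Type*} [NormedAddCommGroup E] [InnerProductSpace ℝ E]
    {n : ℕ} {p : Fin n → Fin n → ℝ} (hsymm : ∀ i j, p i j = p j i)
    (hppos : ∀ i j, i ≠ j → 0 < p i j)
    (hpsum : (∑ i, ∑ j, if i ≠ j then p i j else (0 : ℝ)) = 1)
    {β : ℝ → ℝ} (hβpos : ∀ x, 0 ≤ x → 0 < β x) (hβdiff : DifferentiableOn ℝ β (Set.Ici 0))
    (hγconv : ConvexOn ℝ (Set.Ici 0) fun x => (β x)⁻¹)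
    (hγtop : Tendsto (fun x => (β x)⁻¹) atTop atTop)
    {Y : ℝ → Fin n → E} (hflow : IsGradFlow β p Y) :
    ∃ C c : ℝ, 0 < C ∧ 0 < c ∧
      ∀ t : ℝ, 0 ≤ t → C ≤ ∑ i, ‖Y t i‖ ^ 2 →
        ∀ i j : Fin n, i ≠ j → c * (∑ k, ‖Y t k‖ ^ 2) ≤ ‖Y t i - Y t j‖ ^ 2 := by
  have : NeZero n := ⟨by rintro rfl; simp at hpsum⟩
  rw [← sum_offDiag_univ_eq_sum_sum_ite] at hpsum
  obtain ⟨m, hm, hmp⟩ := exists_pos_forall_mem_le (s := Finset.univ.offDiag)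
    (f := fun e => p e.1 e.2) fun e he => hppos _ _ (Finset.mem_offDiag.1 he).2.2
  obtain ⟨C, c, hC, hc, hsep⟩ := exists_separation_of_crossEntropy_le (E := E) hβpos hγconv hγtop
    hm (fun i j hij => hmp (i, j) (by simpa using hij)) (crossEntropy β p (Y 0)) ‖∑ i, Y 0 i‖
  refine ⟨C, c, hC, hc, fun t ht => hsep (Y t) ?_ (hflow.sum_eq hsymm ht ▸ le_rfl)⟩
  exact hflow.antitoneOn_crossEntropy hβpos hβdiff hsymm hpsum
    (Set.mem_Ici.2 le_rfl) (Set.mem_Ici.2 ht) ht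

/-- **Proposition 3.1.** Under assumptions (A1) and (A2) on `γ = 1/β`, for a solution `Y(t)`
of the gradient flow with center of mass at the origin and `S(t) = Σ_i |y_i(t)|²`, there are
constants `C, c > 0` such that whenever `S(t) ≥ C` one has `|y_i(t) - y_j(t)|² ≥ c S(t)` for
all `i ≠ j`. -/
theorem separation_proposition
    (s n : ℕ) (hs : 1 ≤ s) (hn : s + 1 < n)
    (p : Fin n → Fin n → ℝ)
    (hsymm : ∀ i j, p i j = p j i)
    (hppos : ∀ i j, i ≠ j → 0 < p i j)
    (hpsum : (∑ i, ∑ j, if i ≠ j then p i j else (0 : ℝ)) = 1)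
    (β : ℝ → ℝ)
    (hβpos : ∀ x, 0 ≤ x → 0 < β x)
    (hβsmooth : ContDiffOn ℝ (⊤ : ℕ∞) β (Set.Ici 0))
    (hβanti : AntitoneOn β (Set.Ici 0))
    (hβbdd : ∃ M : ℝ, ∀ x, 0 ≤ x → |lbd β x| ≤ M)
    -- (A1): `γ = 1/β` is convex on `[0,∞)`, `γ(0) = 1`, `γ' ≥ 0`, and `γ(x) → ∞`.
    (hγconv : ConvexOn ℝ (Set.Ici 0) fun x => (β x)⁻¹)
    (hγ0 : (β 0)⁻¹ = 1)
    (hγder : ∀ x, 0 ≤ x → 0 ≤ derivWithin (fun y => (β y)⁻¹) (Set.Ici 0) x)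
    (hγtop : Tendsto (fun x => (β x)⁻¹) atTop atTop)
    -- (A2): `sup_{x ≥ 0} (log γ)'(x) < ∞`.
    (hA2 : ∃ M : ℝ, ∀ x, 0 ≤ x →
      derivWithin (fun y => Real.log ((β y)⁻¹)) (Set.Ici 0) x ≤ M)
    (Y : ℝ → Fin n → EuclideanSpace ℝ (Fin s))
    (hflow : IsGradFlow β p Y)
    (hcm : ∀ t : ℝ, 0 ≤ t → ∑ i, Y t i = 0) :
    ∃ C c : ℝ, 0 < C ∧ 0 < c ∧
      ∀ t : ℝ, 0 ≤ t → C ≤ ∑ i, ‖Y t i‖ ^ 2 →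
        ∀ i j : Fin n, i ≠ j → c * (∑ k, ‖Y t k‖ ^ 2) ≤ ‖Y t i - Y t j‖ ^ 2 :=
  separation_proposition_general hsymm hppos hpsum hβpos (hβsmooth.differentiableOn (by simp))
    hγconv hγtop hflow
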